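/- arXiv:2001.00625 — 2 statements merged into one kernel-verified Lean document; each statement's English description precedes it below -/
import Mathlib

section
/- Let n ≥ 2 and let Q be the set of pairs (μ_{i,j}, μ_{−j,−i}) for i < j in [±n], viewed as relations on the partition monoid of [±n]. If X is a subset of [±n] such that X ∩ (−X) ≠ ∅, then the pair (μ_X, μ_Y) lies in the congruence generated by Q, where Y := {−m} ∪ |X|, with |X| := {|x| : x ∈ X} (viewed as a subset of the positive elements of [±n]) and m := min |X|. -/
instance setoidCommMonoid (α : Type*) : CommMonoid (Setoid α) where
  mul := (· ⊔ ·)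
  one := ⊥
  mul_assoc := sup_assoc
  one_mul := bot_sup_eq
  mul_one := sup_bot_eq
  mul_comm := sup_comm

def muSet {α : Type*} (X : Set α) : Setoid α :=
  Relation.EqvGen.setoid (fun x y => x ∈ X ∧ y ∈ X)

def mu {α : Type*} (i j : α) : Setoid α := muSet {i, j}

/-- `[±n]`: nonzero integers of absolute value at most `n`, with the order from `ℤ`. -/
abbrev PM (n : ℕ) := {k : ℤ // k ≠ 0 ∧ |k| ≤ (n : ℤ)}

namespace PM

/-- The negation involution `k ↦ -k` on `[±n]`. -/
def neg {n : ℕ} (x : PM n) : PM n :=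
  ⟨-x.1, by obtain ⟨h1, h2⟩ := x.2; exact ⟨neg_ne_zero.mpr h1, by rwa [abs_neg]⟩⟩

@[simp] theorem neg_neg {n : ℕ} (x : PM n) : x.neg.neg = x := Subtype.ext (by simp [neg])

theorem neg_lt_neg {n : ℕ} {x y : PM n} (h : x < y) : y.neg < x.neg := by
  have h' : x.1 < y.1 := Subtype.coe_lt_coe.mpr h
  rw [← Subtype.coe_lt_coe]
  show -y.1 < -x.1
  omega

theorem neg_lt_pos {n : ℕ} {x y : PM n} (hx : 0 < x.1) (hy : 0 < y.1) : x.neg < y := by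
  rw [← Subtype.coe_lt_coe]
  show -x.1 < y.1
  omega

theorem pos_ne_neg {n : ℕ} {x y : PM n} (hx : 0 < x.1) (hy : 0 < y.1) : y ≠ x.neg := by
  intro h
  have : y.1 = -x.1 := congrArg Subtype.val h
  omega

theorem neg_lt_self {n : ℕ} {x : PM n} (hx : 0 < x.1) : x.neg < x := neg_lt_pos hx hx

/-- The absolute value map `x ↦ |x|` from `[±n]` to its positive part. -/
def abs {n : ℕ} (x : PM n) : PM n :=
  ⟨|x.1|, by obtain ⟨h1, h2⟩ := x.2; exact ⟨abs_ne_zero.mpr h1, by rwa [abs_abs]⟩⟩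

end PM

/-- Image of a subset of `[±n]` under negation. -/
def negSet {n : ℕ} (K : Set (PM n)) : Set (PM n) := PM.neg '' K

/-- The partition `I⁻` transported along negation: `x ∼ y` in `negPart I` iff `-x ∼ -y` in `I`. -/
def negPart {n : ℕ} (I : Setoid (PM n)) : Setoid (PM n) := Setoid.comap PM.neg I

/-- A set partition `I` of `[±n]` is *signed* if for every block `K` of `I` the set `-K` is
also a block; equivalently, `x ∼ y ↔ -x ∼ -y` for all `x, y`. -/
def IsSigned {n : ℕ} (I : Setoid (PM n)) : Prop :=
  ∀ x y : PM n, I x y ↔ I (PM.neg x) (PM.neg y)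

/-- A *zero block* of a partition `I` is a block `K` with `-K = K`. -/
def IsZeroBlock {n : ℕ} (I : Setoid (PM n)) (K : Set (PM n)) : Prop :=
  K ∈ I.classes ∧ negSet K = K

/-- A `Bₙ`-partition: a signed partition of `[±n]` with at most one zero block. -/
def IsBPart {n : ℕ} (I : Setoid (PM n)) : Prop :=
  IsSigned I ∧ Set.Subsingleton {K | IsZeroBlock I K}

/-- A *restricted* signed partition: all its zero blocks have more than two elements. -/
def IsRestricted {n : ℕ} (I : Setoid (PM n)) : Prop :=
  IsSigned I ∧ ∀ K : Set (PM n), IsZeroBlock I K → 2 < K.ncard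

/-- A `Dₙ`-partition: a `Bₙ`-partition whose zero block (if present) has more than two
elements. -/
def IsDPart {n : ℕ} (I : Setoid (PM n)) : Prop :=
  IsBPart I ∧ ∀ K : Set (PM n), IsZeroBlock I K → 2 < K.ncard

/-- For `i < j` in `[±n]`, the signed partition `ε_{i,j} = μ_{-j,-i} ⊔ μ_{i,j}`. -/
def eps {n : ℕ} (i j : PM n) : Setoid (PM n) := mu (PM.neg j) (PM.neg i) ⊔ mu i j

/-- The set `Q` of pairs `(μ_{i,j}, μ_{-j,-i})` for `i < j` in `[±n]`, viewed as a binary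
relation on the partition monoid of `[±n]`. -/
def QRel (n : ℕ) : Setoid (PM n) → Setoid (PM n) → Prop := fun a b =>
  ∃ i j : PM n, i < j ∧ a = mu i j ∧ b = mu (PM.neg j) (PM.neg i)

theorem muSet_rel {α : Type*} {Z : Set α} {p q : α} (hp : p ∈ Z) (hq : q ∈ Z) :
    muSet Z p q := Relation.EqvGen.rel _ _ ⟨hp, hq⟩

theorem muSet_le {α : Type*} {Z : Set α} {s : Setoid α}
    (h : ∀ p ∈ Z, ∀ q ∈ Z, s p q) : muSet Z ≤ s := by
  intro p q hpq
  induction (show Relation.EqvGen _ p q from hpq) with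
  | rel x y hxy => exact h x hxy.1 y hxy.2
  | refl x => exact s.refl x
  | symm x y h1 ih => exact s.symm (ih h1)
  | trans x y z h1 h2 ih1 ih2 => exact s.trans (ih1 h1) (ih2 h2)

theorem muSet_mul_mu {α : Type*} {Z : Set α} {p q : α} (hp : p ∈ Z) :
    muSet Z * mu p q = muSet (insert q Z) := by
  show muSet Z ⊔ mu p q = muSet (insert q Z)
  apply le_antisymm
  · apply sup_le
    · exact muSet_le fun x hx y hy => muSet_rel (Or.inr hx) (Or.inr hy)
    · apply muSet_le
      have key : ∀ x ∈ ({p, q} : Set α), x ∈ insert q Z := by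
        rintro x (rfl | rfl)
        · exact Or.inr hp
        · exact Or.inl rfl
      exact fun x hx y hy => muSet_rel (key x hx) (key y hy)
  · have key : ∀ x ∈ insert q Z, (muSet Z ⊔ mu p q) p x := by
      rintro x (rfl | hx)
      · exact (le_sup_right : mu p x ≤ muSet Z ⊔ mu p x)
          (muSet_rel (Or.inl rfl) (Or.inr rfl))
      · exact (le_sup_left : muSet Z ≤ muSet Z ⊔ mu p q) (muSet_rel hp hx)
    exact muSet_le fun x hx y hy => Setoid.trans' _ (Setoid.symm' _ (key x hx)) (key y hy)

theorem mu_swap {α : Type*} (p q : α) : mu p q = mu q p := by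
  unfold mu; rw [Set.pair_comm]

theorem conGen_mu_neg {n : ℕ} (i j : PM n) (hij : i ≠ j) :
    conGen (QRel n) (mu i j) (mu i.neg j.neg) := by
  rcases lt_or_gt_of_ne hij with h | h
  · rw [mu_swap i.neg]
    exact ConGen.Rel.of _ _ ⟨i, j, h, rfl, rfl⟩
  · rw [mu_swap i j]
    exact ConGen.Rel.of _ _ ⟨j, i, h, rfl, rfl⟩

theorem conGen_insert {n : ℕ} {Z : Set (PM n)} {a b : PM n} (ha : a ∈ Z) (ha' : a.neg ∈ Z)
    (hb : b ∈ Z) : conGen (QRel n) (muSet Z) (muSet (insert b.neg Z)) := by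
  by_cases hab : a = b
  · subst hab
    rw [Set.insert_eq_of_mem ha']
    exact (conGen (QRel n)).refl _
  · have h := (conGen (QRel n)).mul ((conGen (QRel n)).refl (muSet Z)) (conGen_mu_neg a b hab)
    rwa [muSet_mul_mu ha, muSet_mul_mu ha', Set.insert_eq_of_mem hb] at h

theorem finite_PM (n : ℕ) : Finite (PM n) := by
  apply Set.Finite.to_subtype
  apply (Set.finite_Icc (-(n : ℤ)) n).subset
  intro k hk
  exact abs_le.mp hk.2

theorem conGen_union_neg {n : ℕ} {X : Set (PM n)} {a : PM n} (ha : a ∈ X) (ha' : a.neg ∈ X) :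
    conGen (QRel n) (muSet X) (muSet (X ∪ negSet X)) := by
  haveI := finite_PM n
  suffices h : ∀ S : Set (PM n), S.Finite → S ⊆ X →
      conGen (QRel n) (muSet X) (muSet (X ∪ negSet S)) from h X X.toFinite subset_rfl
  intro S hS
  induction S, hS using Set.Finite.induction_on with
  | empty =>
    intro _
    simp only [negSet, Set.image_empty, Set.union_empty]
    exact (conGen (QRel n)).refl _
  | @insert b S _ _ ih =>
    intro hsub
    have h1 := ih fun x hx => hsub (Or.inr hx)
    have hb : b ∈ X := hsub (Or.inl rfl)
    have h2 := conGen_insert (Z := X ∪ negSet S) (Or.inl ha) (Or.inl ha') (Or.inl hb)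
    have h3 : X ∪ negSet (insert b S) = insert b.neg (X ∪ negSet S) := by
      simp only [negSet, Set.image_insert_eq, Set.union_insert]
    rw [h3]
    exact (conGen (QRel n)).trans h1 h2

theorem pm_abs_cases {n : ℕ} (x : PM n) : x.abs = x ∨ x.abs = x.neg := by
  rcases abs_choice x.1 with h | h
  · exact Or.inl (Subtype.ext h)
  · exact Or.inr (Subtype.ext h)

/-- If `X ⊆ [±n]` satisfies `X ∩ (-X) ≠ ∅`, then `(μ_X, μ_Y)` lies in
the congruence generated by `Q`, where `Y = {-m} ∪ |X|` and `m = min |X|`. -/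
theorem mu_conGen_Q_of_inter_neg (n : ℕ) (hn : 2 ≤ n) (X : Set (PM n))
    (hX : (X ∩ negSet X).Nonempty) (m : PM n) (hm : IsLeast (PM.abs '' X) m) :
    conGen (QRel n) (muSet X) (muSet ({PM.neg m} ∪ PM.abs '' X)) := by
  obtain ⟨a', ha', a, ha, rfl⟩ := hX
  have h1 := conGen_union_neg ha ha'
  have h2 := conGen_union_neg (X := {PM.neg m} ∪ PM.abs '' X) (a := m)
    (Or.inr hm.1) (Or.inl rfl)
  have hU : ∀ (W : Set (PM n)) (x : PM n), x ∈ W ∪ negSet W → x.neg ∈ W ∪ negSet W := by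
    rintro W x (hx | ⟨y, hy, rfl⟩)
    · exact Or.inr ⟨x, hx, rfl⟩
    · rw [PM.neg_neg]; exact Or.inl hy
  have sub : ∀ V W : Set (PM n), V ⊆ W ∪ negSet W → V ∪ negSet V ⊆ W ∪ negSet W := by
    rintro V W h x (hx | ⟨y, hy, rfl⟩)
    · exact h hx
    · exact hU _ _ (h hy)
  have habs : ∀ x ∈ X, x.abs ∈ X ∪ negSet X := by
    intro x hx
    rcases pm_abs_cases x with h | h <;> rw [h]
    · exact Or.inl hx
    · exact Or.inr ⟨x, hx, rfl⟩
  have h3 : X ∪ negSet X = ({PM.neg m} ∪ PM.abs '' X) ∪ negSet ({PM.neg m} ∪ PM.abs '' X) := by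
    apply Set.Subset.antisymm
    · apply sub
      intro x hx
      have hx' : x.abs ∈ ({PM.neg m} ∪ PM.abs '' X : Set (PM n)) := Or.inr ⟨x, hx, rfl⟩
      rcases pm_abs_cases x with h | h <;> rw [h] at hx'
      · exact Or.inl hx'
      · exact Or.inr ⟨_, hx', PM.neg_neg x⟩
    · apply sub
      rintro x (hx | ⟨y, hy, rfl⟩)
      · obtain ⟨y, hy, rfl⟩ := hm.1
        rw [Set.mem_singleton_iff.mp hx]
        exact hU _ _ (habs y hy)
      · exact habs y hy
  rw [h3] at h1
  exact (conGen (QRel n)).trans h1 ((conGen (QRel n)).symm h2)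
end

section
/- Let n ≥ 2. Let VB_n be the group presented by generators σ_1,…,σ_{n−1}, ν_1,…,ν_{n−1} subject to: σ_iσ_jσ_i = σ_jσ_iσ_j and ν_iν_jν_i = ν_jν_iν_j for |i−j| = 1; σ_iσ_j = σ_jσ_i, ν_iν_j = ν_jν_i and σ_iν_j = ν_jσ_i for |i−j| ≥ 2; ν_i² = 1; σ_iν_jν_i = ν_jν_iσ_j for |i−j| = 1; and let π : VB_n → Perm(Fin n) be the group homomorphism with π(σ_i) = π(ν_i) the transposition of i and i+1. Let TVB_n be the monoid presented by generators s_i, s_i', v_i, e_i (1 ≤ i ≤ n−1) subject to: (B0) s_i s_i' = s_i' s_i = 1; the above braid, virtual, and mixed relations with σ_i replaced by s_i and ν_i by v_i (using s_i' for σ_i⁻¹); (T1) e_i² = e_i; (T2) e_i e_j = e_j e_i; (T3) e_i s_j s_i = s_j s_i e_j for |i−j| = 1; (T4) s_i e_j = e_j s_i for |i−j| ≠ 1; (T5) e_i e_j s_i = e_j s_i e_j = s_i e_i e_j for |i−j| = 1; (TV1) e_i v_j v_i = v_j v_i e_j for |i−j| = 1; (TV2) e_i v_j s_i = v_j s_i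 e_j for |i−j| = 1; (TV3) e_i s_j v_i = s_j v_i e_j for |i−j| = 1; (TV4) v_i e_j = s_i e_j s_i' v_i for |i−j| = 1; (TV5) e_i v_j = v_j e_i for |i−j| ≠ 1; (TV6) e_i e_j v_i = e_j v_i e_j = v_i e_i e_j for |i−j| = 1. Then there is a bijection F : TVB_n → Setoid(Fin n) × VB_n such that F(1) = (⊥, 1), F(s_i) = (⊥, σ_i), F(s_i') = (⊥, σ_i⁻¹), F(v_i) = (⊥, ν_i), F(e_i) = (μ_{i,i+1}, 1), and F(x·y) = (F(x)₁ ⊔ π(F(x)₂) • F(y)₁, F(x)₂ · F(y)₂) for all x, y, where w • I is the transported partition (x ∼_{w•I} y iff w⁻¹x ∼_I w⁻¹y). -/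
/-- Transport of a partition along a permutation: `x ∼ y` in `w • I` iff
`w⁻¹ x ∼ w⁻¹ y` in `I`. -/
def permAct {β : Type*} (w : Equiv.Perm β) (I : Setoid β) : Setoid β :=
  Setoid.comap w.symm I

/-- `|i - j| = 1` for indices. -/
def adjIdx {m : ℕ} (i j : Fin m) : Prop := i.1 + 1 = j.1 ∨ j.1 + 1 = i.1

/-- `|i - j| ≥ 2` for indices. -/
def farIdx {m : ℕ} (i j : Fin m) : Prop := i.1 + 2 ≤ j.1 ∨ j.1 + 2 ≤ i.1

/-- The element `i` of `Fin n` corresponding to `i : Fin (n-1)`. -/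
def lo {n : ℕ} (i : Fin (n - 1)) : Fin n := ⟨i.1, by have := i.isLt; omega⟩

/-- The element `i + 1` of `Fin n` corresponding to `i : Fin (n-1)`. -/
def hi {n : ℕ} (i : Fin (n - 1)) : Fin n := ⟨i.1 + 1, by have := i.isLt; omega⟩

/-- Generators `σ_i` and `ν_i` of the virtual braid group. -/
inductive VGen (n : ℕ) : Type
  | σ (i : Fin (n - 1)) : VGen n
  | ν (i : Fin (n - 1)) : VGen n

open FreeGroup in
/-- The relators of the virtual braid group `VBₙ`. -/
inductive VRelator (n : ℕ) : FreeGroup (VGen n) → Prop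
  /-- `σᵢσⱼσᵢ = σⱼσᵢσⱼ` for `|i-j| = 1`. -/
  | braidσ (i j : Fin (n - 1)) (h : adjIdx i j) :
      VRelator n (of (.σ i) * of (.σ j) * of (.σ i) * (of (.σ j) * of (.σ i) * of (.σ j))⁻¹)
  /-- `νᵢνⱼνᵢ = νⱼνᵢνⱼ` for `|i-j| = 1`. -/
  | braidν (i j : Fin (n - 1)) (h : adjIdx i j) :
      VRelator n (of (.ν i) * of (.ν j) * of (.ν i) * (of (.ν j) * of (.ν i) * of (.ν j))⁻¹)
  /-- `σᵢσⱼ = σⱼσᵢ` for `|i-j| ≥ 2`. -/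
  | commσσ (i j : Fin (n - 1)) (h : farIdx i j) :
      VRelator n (of (.σ i) * of (.σ j) * (of (.σ j) * of (.σ i))⁻¹)
  /-- `νᵢνⱼ = νⱼνᵢ` for `|i-j| ≥ 2`. -/
  | commνν (i j : Fin (n - 1)) (h : farIdx i j) :
      VRelator n (of (.ν i) * of (.ν j) * (of (.ν j) * of (.ν i))⁻¹)
  /-- `σᵢνⱼ = νⱼσᵢ` for `|i-j| ≥ 2`. -/
  | commσν (i j : Fin (n - 1)) (h : farIdx i j) :
      VRelator n (of (.σ i) * of (.ν j) * (of (.ν j) * of (.σ i))⁻¹)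
  /-- `νᵢ² = 1`. -/
  | invol (i : Fin (n - 1)) : VRelator n (of (.ν i) * of (.ν i))
  /-- `σᵢνⱼνᵢ = νⱼνᵢσⱼ` for `|i-j| = 1`. -/
  | mixed (i j : Fin (n - 1)) (h : adjIdx i j) :
      VRelator n (of (.σ i) * of (.ν j) * of (.ν i) * (of (.ν j) * of (.ν i) * of (.σ j))⁻¹)

/-- The virtual braid group `VBₙ`. -/
abbrev VirtualBraidGroup (n : ℕ) := PresentedGroup {x | VRelator n x}

/-- Generators `s_i`, `s_i'` (formal inverses), `v_i` and `e_i` of the tied virtual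
braid monoid. -/
inductive TVGen (n : ℕ) : Type
  | s (i : Fin (n - 1)) : TVGen n
  | s' (i : Fin (n - 1)) : TVGen n
  | v (i : Fin (n - 1)) : TVGen n
  | e (i : Fin (n - 1)) : TVGen n

open FreeMonoid in
/-- The defining relations of the tied virtual braid monoid `TVBₙ`. -/
inductive TVRel (n : ℕ) : FreeMonoid (TVGen n) → FreeMonoid (TVGen n) → Prop
  /-- (B0) `s_i s_i' = 1`. -/
  | B0a (i : Fin (n - 1)) : TVRel n (of (.s i) * of (.s' i)) 1
  /-- (B0) `s_i' s_i = 1`. -/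
  | B0b (i : Fin (n - 1)) : TVRel n (of (.s' i) * of (.s i)) 1
  /-- `s_i s_j s_i = s_j s_i s_j` for `|i-j| = 1`. -/
  | B1 (i j : Fin (n - 1)) (h : adjIdx i j) :
      TVRel n (of (.s i) * of (.s j) * of (.s i)) (of (.s j) * of (.s i) * of (.s j))
  /-- `v_i v_j v_i = v_j v_i v_j` for `|i-j| = 1`. -/
  | V2 (i j : Fin (n - 1)) (h : adjIdx i j) :
      TVRel n (of (.v i) * of (.v j) * of (.v i)) (of (.v j) * of (.v i) * of (.v j))
  /-- `s_i s_j = s_j s_i` for `|i-j| ≥ 2`. -/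
  | B2 (i j : Fin (n - 1)) (h : farIdx i j) :
      TVRel n (of (.s i) * of (.s j)) (of (.s j) * of (.s i))
  /-- `v_i v_j = v_j v_i` for `|i-j| ≥ 2`. -/
  | V3 (i j : Fin (n - 1)) (h : farIdx i j) :
      TVRel n (of (.v i) * of (.v j)) (of (.v j) * of (.v i))
  /-- `s_i v_j = v_j s_i` for `|i-j| ≥ 2`. -/
  | V5 (i j : Fin (n - 1)) (h : farIdx i j) :
      TVRel n (of (.s i) * of (.v j)) (of (.v j) * of (.s i))
  /-- `v_i² = 1`. -/
  | V1 (i : Fin (n - 1)) : TVRel n (of (.v i) * of (.v i)) 1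
  /-- `s_i v_j v_i = v_j v_i s_j` for `|i-j| = 1`. -/
  | V4 (i j : Fin (n - 1)) (h : adjIdx i j) :
      TVRel n (of (.s i) * of (.v j) * of (.v i)) (of (.v j) * of (.v i) * of (.s j))
  /-- (T1) `e_i e_i = e_i`. -/
  | T1 (i : Fin (n - 1)) : TVRel n (of (.e i) * of (.e i)) (of (.e i))
  /-- (T2) `e_i e_j = e_j e_i`. -/
  | T2 (i j : Fin (n - 1)) : TVRel n (of (.e i) * of (.e j)) (of (.e j) * of (.e i))
  /-- (T3) `e_i s_j s_i = s_j s_i e_j` for `|i-j| = 1`. -/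
  | T3 (i j : Fin (n - 1)) (h : adjIdx i j) :
      TVRel n (of (.e i) * of (.s j) * of (.s i)) (of (.s j) * of (.s i) * of (.e j))
  /-- (T4) `s_i e_j = e_j s_i` for `|i-j| ≠ 1`. -/
  | T4 (i j : Fin (n - 1)) (h : ¬ adjIdx i j) :
      TVRel n (of (.s i) * of (.e j)) (of (.e j) * of (.s i))
  /-- (T5) `e_i e_j s_i = e_j s_i e_j` for `|i-j| = 1`. -/
  | T5a (i j : Fin (n - 1)) (h : adjIdx i j) :
      TVRel n (of (.e i) * of (.e j) * of (.s i)) (of (.e j) * of (.s i) * of (.e j))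
  /-- (T5) `e_j s_i e_j = s_i e_i e_j` for `|i-j| = 1`. -/
  | T5b (i j : Fin (n - 1)) (h : adjIdx i j) :
      TVRel n (of (.e j) * of (.s i) * of (.e j)) (of (.s i) * of (.e i) * of (.e j))
  /-- (TV1) `e_i v_j v_i = v_j v_i e_j` for `|i-j| = 1`. -/
  | TV1 (i j : Fin (n - 1)) (h : adjIdx i j) :
      TVRel n (of (.e i) * of (.v j) * of (.v i)) (of (.v j) * of (.v i) * of (.e j))
  /-- (TV2) `e_i v_j s_i = v_j s_i e_j` for `|i-j| = 1`. -/
  | TV2 (i j : Fin (n - 1)) (h : adjIdx i j) :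
      TVRel n (of (.e i) * of (.v j) * of (.s i)) (of (.v j) * of (.s i) * of (.e j))
  /-- (TV3) `e_i s_j v_i = s_j v_i e_j` for `|i-j| = 1`. -/
  | TV3 (i j : Fin (n - 1)) (h : adjIdx i j) :
      TVRel n (of (.e i) * of (.s j) * of (.v i)) (of (.s j) * of (.v i) * of (.e j))
  /-- (TV4) `v_i e_j = s_i e_j s_i' v_i` for `|i-j| = 1`. -/
  | TV4 (i j : Fin (n - 1)) (h : adjIdx i j) :
      TVRel n (of (.v i) * of (.e j)) (of (.s i) * of (.e j) * of (.s' i) * of (.v i))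
  /-- (TV5) `e_i v_j = v_j e_i` for `|i-j| ≠ 1`. -/
  | TV5 (i j : Fin (n - 1)) (h : ¬ adjIdx i j) :
      TVRel n (of (.e i) * of (.v j)) (of (.v j) * of (.e i))
  /-- (TV6) `e_i e_j v_i = e_j v_i e_j` for `|i-j| = 1`. -/
  | TV6a (i j : Fin (n - 1)) (h : adjIdx i j) :
      TVRel n (of (.e i) * of (.e j) * of (.v i)) (of (.e j) * of (.v i) * of (.e j))
  /-- (TV6) `e_j v_i e_j = v_i e_i e_j` for `|i-j| = 1`. -/
  | TV6b (i j : Fin (n - 1)) (h : adjIdx i j) :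
      TVRel n (of (.e j) * of (.v i) * of (.e j)) (of (.v i) * of (.e i) * of (.e j))

section TVBAct
variable {G X : Type*} [Group G] [MulAction G X]

/-- `EE v e i d` stands for the element attached to the pair `{i, i+d+1}`. -/
def EE (v : ℕ → G) (e : ℕ → X) (i : ℕ) : ℕ → X
  | 0 => e i
  | d + 1 => v (i + d + 1) • EE v e i d

/-- Hypotheses on the family `t` of group elements acting as adjacent transpositions. -/
structure GoodT (m : ℕ) (v t : ℕ → G) (e : ℕ → X) : Prop where
  far : ∀ i j, i < m → j < m → (i + 2 ≤ j ∨ j + 2 ≤ i) → t i * v j = v j * t i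
  mix : ∀ i j, i < m → j < m → (i + 1 = j ∨ j + 1 = i) → t i * v j * v i = v j * v i * t j
  fix : ∀ i j, i < m → j < m → ¬ (i + 1 = j ∨ j + 1 = i) → t i • e j = e j
  adj : ∀ i j, i < m → j < m → (i + 1 = j ∨ j + 1 = i) → t i • e j = v i • e j
  adjinv : ∀ i j, i < m → j < m → (i + 1 = j ∨ j + 1 = i) → t i • v i • e j = e j
  flip : ∀ i j, i < m → j < m → (i + 1 = j ∨ j + 1 = i) → v j • e i = v i • e j

variable {m : ℕ} {v t : ℕ → G} {e : ℕ → X}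

theorem GoodT.far' (h : GoodT m v t e) (i j : ℕ) (hi : i < m) (hj : j < m)
    (hij : i + 2 ≤ j ∨ j + 2 ≤ i) (x : X) : t i • v j • x = v j • t i • x := by
  rw [smul_smul, smul_smul, h.far i j hi hj hij]

theorem EE_A (h : GoodT m v t e) (i k : ℕ) (hk : k < m) :
    ∀ d, i + d < m → (k + 1 < i ∨ i + d + 1 < k) → t k • EE v e i d = EE v e i d
  | 0, hd, hh => by
    simp only [EE]
    exact h.fix _ _ hk (by omega) (by omega)
  | d + 1, hd, hh => by
    simp only [EE]
    rw [h.far' k _ hk (by omega) (by omega), EE_A h i k hk d (by omega) (by omega)]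

theorem EE_B (h : GoodT m v t e) (i : ℕ) :
    ∀ d, i + 1 + d < m → t i • EE v e (i + 1) d = EE v e i (d + 1)
  | 0, hd => by
    simp only [EE]
    rw [h.adj _ _ (by omega) (by omega) (by omega)]
    exact (h.flip _ _ (by omega) (by omega) (by omega)).symm
  | d + 1, hd => by
    rw [EE, h.far' i _ (by omega) (by omega) (by omega), EE_B h i d (by omega),
      show i + 1 + d + 1 = i + (d + 1) + 1 by omega]
    rfl

theorem EE_Binv (h : GoodT m v t e) (i : ℕ) :
    ∀ d, i + 1 + d < m → t i • EE v e i (d + 1) = EE v e (i + 1) d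
  | 0, hd => by
    simp only [EE]
    rw [add_zero, h.flip i (i + 1) (by omega) (by omega) (by omega)]
    exact h.adjinv _ _ (by omega) (by omega) (by omega)
  | d + 1, hd => by
    rw [EE, h.far' i _ (by omega) (by omega) (by omega), EE_Binv h i d (by omega),
      show i + (d + 1) + 1 = i + 1 + d + 1 by omega]
    rfl

theorem EE_C (h : GoodT m v t e) (hv : GoodT m v v e) :
    ∀ d i, i + d + 1 < m → t (i + d + 1) • EE v e i d = EE v e i (d + 1)
  | 0, i, hd => by
    simp only [EE]
    exact h.adj _ _ (by omega) (by omega) (by omega)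
  | d + 1, i, hd => by
    rw [← EE_B hv i d (by omega), h.far' _ _ (by omega) (by omega) (by omega),
      show i + (d + 1) + 1 = i + 1 + d + 1 by omega, EE_C h hv d (i + 1) (by omega),
      EE_B hv i (d + 1) (by omega)]

theorem EE_Cinv (h : GoodT m v t e) (hv : GoodT m v v e) :
    ∀ d i, i + d + 1 < m → t (i + d + 1) • EE v e i (d + 1) = EE v e i d
  | 0, i, hd => by
    simp only [EE]
    exact h.adjinv _ _ (by omega) (by omega) (by omega)
  | d + 1, i, hd => by
    rw [← EE_B hv i (d + 1) (by omega), h.far' _ _ (by omega) (by omega) (by omega),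
      show i + (d + 1) + 1 = i + 1 + d + 1 by omega, EE_Cinv h hv d (i + 1) (by omega),
      EE_B hv i d (by omega)]

theorem EE_D (h : GoodT m v t e) (i k : ℕ) (hik : i < k) :
    ∀ d, i + d < m → k < i + d → t k • EE v e i d = EE v e i d
  | 0, hd, hk => by omega
  | d + 1, hd, hk => by
    by_cases hk' : k < i + d
    · rw [EE, h.far' _ _ (by omega) (by omega) (by omega), EE_D h i k hik d (by omega) hk']
    · obtain ⟨d, rfl⟩ : ∃ d', d = d' + 1 := ⟨d - 1, by omega⟩
      obtain rfl : k = i + d + 1 := by omega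
      simp only [EE]
      rw [smul_smul, smul_smul, h.mix _ _ (by omega) (by omega) (by omega), mul_smul, mul_smul,
        EE_A h i _ (by omega) d (by omega) (by omega)]

/-- The symmetric version. -/
def ep (o : X) (v : ℕ → G) (e : ℕ → X) (a b : ℕ) : X :=
  if a < b then EE v e a (b - a - 1) else if b < a then EE v e b (a - b - 1) else o

theorem ep_symm (o : X) (v : ℕ → G) (e : ℕ → X) (a b : ℕ) : ep o v e a b = ep o v e b a := by
  unfold ep
  rcases lt_trichotomy a b with h | h | h
  · simp [h, h.le]
  · simp [h]
  · simp [h, h.le]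

theorem ep_self (o : X) (v : ℕ → G) (e : ℕ → X) (a : ℕ) : ep o v e a a = o := by simp [ep]

theorem ep_lt (o : X) (v : ℕ → G) (e : ℕ → X) (a d : ℕ) :
    ep o v e a (a + d + 1) = EE v e a d := by
  unfold ep
  rw [if_pos (by omega)]
  congr 1
  omega

theorem ep_swap_lt (h : GoodT m v t e) (hv : GoodT m v v e) (o : X)
    (k a b : ℕ) (hk : k < m) (hab : a < b) (hb : b ≤ m) :
    t k • ep o v e a b = ep o v e (Equiv.swap k (k + 1) a) (Equiv.swap k (k + 1) b) := by
  obtain ⟨d, rfl⟩ : ∃ d, b = a + d + 1 := ⟨b - a - 1, by omega⟩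
  rw [ep_lt]
  by_cases h1 : k + 1 < a ∨ a + d + 1 < k
  · rw [Equiv.swap_apply_of_ne_of_ne (by omega) (by omega),
      Equiv.swap_apply_of_ne_of_ne (by omega) (by omega), ep_lt, EE_A h a k hk d (by omega) h1]
  by_cases h2 : k + 1 = a
  · subst h2
    rw [Equiv.swap_apply_right, Equiv.swap_apply_of_ne_of_ne (by omega) (by omega),
      EE_B h k d (by omega), show k + 1 + d + 1 = k + (d + 1) + 1 by omega, ep_lt]
  by_cases h3 : k = a + d + 1
  · subst h3
    rw [Equiv.swap_apply_left, Equiv.swap_apply_of_ne_of_ne (by omega) (by omega),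
      EE_C h hv d a (by omega), show a + d + 1 + 1 = a + (d + 1) + 1 by omega, ep_lt]
  by_cases h4 : k = a
  · subst h4
    rw [Equiv.swap_apply_left]
    rcases d with _ | d
    · simp only [add_zero]
      rw [Equiv.swap_apply_right, ep_symm]
      rw [show ep o v e k (k + 1) = EE v e k 0 from ep_lt o v e k 0]
      exact h.fix _ _ hk hk (by omega)
    · rw [Equiv.swap_apply_of_ne_of_ne (by omega) (by omega), EE_Binv h k d (by omega),
        show k + (d + 1) + 1 = k + 1 + d + 1 by omega, ep_lt]
  by_cases h5 : k = a + d
  · subst h5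
    obtain ⟨d, rfl⟩ : ∃ d', d = d' + 1 := ⟨d - 1, by omega⟩
    rw [Equiv.swap_apply_right, Equiv.swap_apply_of_ne_of_ne (by omega) (by omega)]
    rw [show a + (d + 1) = a + d + 1 by omega, EE_Cinv h hv d a (by omega), ep_lt]
  · rw [Equiv.swap_apply_of_ne_of_ne (by omega) (by omega),
      Equiv.swap_apply_of_ne_of_ne (by omega) (by omega), ep_lt,
      EE_D h a k (by omega) d (by omega) (by omega)]

theorem ep_swap (h : GoodT m v t e) (hv : GoodT m v v e) (o : X) (ho : ∀ g : G, g • o = o)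
    (k a b : ℕ) (hk : k < m) (ha : a ≤ m) (hb : b ≤ m) :
    t k • ep o v e a b = ep o v e (Equiv.swap k (k + 1) a) (Equiv.swap k (k + 1) b) := by
  rcases lt_trichotomy a b with hh | hh | hh
  · exact ep_swap_lt h hv o k a b hk hh hb
  · subst hh
    rw [ep_self, ep_self, ho]
  · rw [ep_symm, ep_swap_lt h hv o k b a hk hh ha, ep_symm]

end TVBAct
section PsiSec
variable {M α : Type*} [Monoid M]

/-- Characterisation of the image of the partition `J`. -/
structure IsPsi (f : α → α → M) (J : Setoid α) (p : M) : Prop where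
  mem : p ∈ Submonoid.closure {x | ∃ a b, f a b = x}
  absorb : ∀ a b, J a b → p * f a b = p
  least : ∀ q ∈ Submonoid.closure {x | ∃ a b, f a b = x},
    (∀ a b, J a b → q * f a b = q) → q * p = q

variable {f : α → α → M}

theorem closure_comm_of (hc : ∀ a b c d, f a b * f c d = f c d * f a b) (x y : M)
    (hx : x ∈ Submonoid.closure {x | ∃ a b, f a b = x})
    (hy : y ∈ Submonoid.closure {x | ∃ a b, f a b = x}) : x * y = y * x := by
  have h1 : ∀ a b, ∀ y ∈ Submonoid.closure {x | ∃ a b, f a b = x}, Commute (f a b) y := by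
    intro a b y hy
    induction hy using Submonoid.closure_induction with
    | mem z hz => obtain ⟨c, d, rfl⟩ := hz; exact hc a b c d
    | one => exact Commute.one_right _
    | mul u w _ _ h1 h2 => exact h1.mul_right h2
  show Commute x y
  induction hx using Submonoid.closure_induction with
  | mem z hz => obtain ⟨c, d, rfl⟩ := hz; exact h1 c d y hy
  | one => exact Commute.one_left _
  | mul u w _ _ h1 h2 => exact h1.mul_left h2

theorem IsPsi.unique (hc : ∀ a b c d, f a b * f c d = f c d * f a b) {J : Setoid α} {p q : M}
    (hp : IsPsi f J p) (hq : IsPsi f J q) : p = q := by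
  rw [← hq.least p hp.mem hp.absorb, closure_comm_of hc _ _ hp.mem hq.mem,
    hp.least q hq.mem hq.absorb]

theorem IsPsi.exists [Finite α] (hc : ∀ a b c d, f a b * f c d = f c d * f a b)
    (hi : ∀ a b, f a b * f a b = f a b) (J : Setoid α) : ∃ p, IsPsi f J p := by
  classical
  cases nonempty_fintype α
  have key : ∀ T : Finset (α × α), ∃ p ∈ Submonoid.closure {x | ∃ a b, f a b = x},
      (∀ x ∈ T, p * f x.1 x.2 = p) ∧
      ∀ q ∈ Submonoid.closure {x | ∃ a b, f a b = x}, (∀ x ∈ T, q * f x.1 x.2 = q) → q * p = q := by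
    intro T
    induction T using Finset.induction_on with
    | empty => exact ⟨1, Submonoid.one_mem _, by simp, by simp⟩
    | insert x T hx ih =>
      obtain ⟨p, hp, h1, h2⟩ := ih
      have hm : f x.1 x.2 ∈ Submonoid.closure {x | ∃ a b, f a b = x} :=
        Submonoid.subset_closure ⟨_, _, rfl⟩
      refine ⟨p * f x.1 x.2, Submonoid.mul_mem _ hp hm, ?_, ?_⟩
      · intro y hy
        rcases Finset.mem_insert.1 hy with rfl | hy
        · rw [mul_assoc, hi]
        · rw [mul_assoc, hc, ← mul_assoc, h1 y hy]
      · intro q hq h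
        rw [← mul_assoc, h2 q hq fun y hy => h y (Finset.mem_insert_of_mem hy),
          h x (Finset.mem_insert_self _ _)]
  obtain ⟨p, hp, h1, h2⟩ := key (Finset.univ.filter fun x => J x.1 x.2)
  refine ⟨p, hp, fun a b h => h1 (a, b) (by simpa using h), fun q hq h => h2 q hq ?_⟩
  intro x hx
  exact h _ _ (by simpa using hx)

/-- The partition absorbed by `p`. -/
def absSetoid (f : α → α → M) (h1 : ∀ a, f a a = 1) (hs : ∀ a b, f a b = f b a)
    (ht : ∀ a b c, f a b * f b c * f a c = f a b * f b c) (p : M) : Setoid α where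
  r a b := p * f a b = p
  iseqv := ⟨fun a => by rw [h1, mul_one], fun {a b} h => by rw [hs b a]; exact h,
    fun {a b c} hab hbc => by
      have : p * (f a b * f b c * f a c) = p * (f a b * f b c) := by rw [ht]
      rwa [← mul_assoc, ← mul_assoc, hab, hbc] at this⟩

theorem IsPsi.bot (h1 : ∀ a, f a a = 1) : IsPsi f ⊥ 1 :=
  ⟨Submonoid.one_mem _, fun a b h => by
    obtain rfl : a = b := h
    rw [h1, mul_one], fun q _ _ => mul_one q⟩

theorem mu_le_iff {a b : α} {I : Setoid α} : mu a b ≤ I ↔ I a b := by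
  constructor
  · intro h
    exact h (Relation.EqvGen.rel _ _ ⟨by simp, by simp⟩)
  · intro h
    refine Setoid.eqvGen_le ?_
    rintro x y ⟨hx, hy⟩
    rcases hx with rfl | rfl <;> rcases hy with rfl | rfl
    · exact I.refl _
    · exact h
    · exact I.symm h
    · exact I.refl _

theorem mu_rel (a b : α) : (mu a b) a b := mu_le_iff.1 le_rfl

theorem IsPsi.mu (h1 : ∀ a, f a a = 1) (hs : ∀ a b, f a b = f b a)
    (ht : ∀ a b c, f a b * f b c * f a c = f a b * f b c)
    (hi : ∀ a b, f a b * f a b = f a b) (a b : α) : IsPsi f (mu a b) (f a b) := by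
  refine ⟨Submonoid.subset_closure ⟨_, _, rfl⟩, ?_, fun q _ h => h a b (mu_rel a b)⟩
  have : _root_.mu a b ≤ absSetoid f h1 hs ht (f a b) := mu_le_iff.2 (hi a b)
  intro x y hxy
  exact this hxy

theorem IsPsi.sup (h1 : ∀ a, f a a = 1) (hs : ∀ a b, f a b = f b a)
    (ht : ∀ a b c, f a b * f b c * f a c = f a b * f b c)
    (hc : ∀ a b c d, f a b * f c d = f c d * f a b) {I J : Setoid α} {p q : M}
    (hp : IsPsi f I p) (hq : IsPsi f J q) : IsPsi f (I ⊔ J) (p * q) := by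
  refine ⟨Submonoid.mul_mem _ hp.mem hq.mem, ?_, ?_⟩
  · have hI : I ≤ absSetoid f h1 hs ht (p * q) := by
      intro x y h
      show p * q * f x y = p * q
      rw [closure_comm_of hc _ _ hp.mem hq.mem, mul_assoc, hp.absorb _ _ h]
    have hJ : J ≤ absSetoid f h1 hs ht (p * q) := by
      intro x y h
      show p * q * f x y = p * q
      rw [mul_assoc, hq.absorb _ _ h]
    intro a b h
    exact (sup_le hI hJ) h
  · intro r hr h
    rw [← mul_assoc, hp.least r hr fun a b hab => h a b ((le_sup_left : I ≤ I ⊔ J) hab),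
      hq.least r hr fun a b hab => h a b ((le_sup_right : J ≤ I ⊔ J) hab)]

theorem IsPsi.act (c : M ≃* M) (w : Equiv.Perm α) (hcw : ∀ a b, c (f a b) = f (w a) (w b))
    {J : Setoid α} {p : M} (hp : IsPsi f J p) : IsPsi f (permAct w J) (c p) := by
  have hcw' : ∀ a b, c.symm (f a b) = f (w.symm a) (w.symm b) := by
    intro a b
    rw [MulEquiv.symm_apply_eq, hcw]; simp
  have st : ∀ (c : M ≃* M) (w : Equiv.Perm α) (_ : ∀ a b, c (f a b) = f (w a) (w b)) (x : M),
      x ∈ Submonoid.closure {x | ∃ a b, f a b = x} →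
      c x ∈ Submonoid.closure {x | ∃ a b, f a b = x} := by
    intro c w hcw x hx
    induction hx using Submonoid.closure_induction with
    | mem z hz =>
      obtain ⟨a, b, rfl⟩ := hz
      rw [hcw]; exact Submonoid.subset_closure ⟨_, _, rfl⟩
    | one => rw [map_one]; exact Submonoid.one_mem _
    | mul u w _ _ h1 h2 => rw [map_mul]; exact Submonoid.mul_mem _ h1 h2
  refine ⟨st c w hcw _ hp.mem, ?_, ?_⟩
  · intro a b h
    have := hp.absorb _ _ h
    apply c.symm.injective
    rw [map_mul, c.symm_apply_apply, hcw']
    exact this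
  · intro q hq h
    apply c.symm.injective
    rw [map_mul, c.symm_apply_apply]
    refine hp.least _ (st c.symm w.symm hcw' _ hq) ?_
    intro a b hab
    have := h (w a) (w b) (by show J _ _; simpa using hab)
    rw [← hcw] at this
    apply c.injective
    rw [map_mul, c.apply_symm_apply, this]

theorem permAct_le_iff {w : Equiv.Perm α} {I J : Setoid α} :
    permAct w I ≤ J ↔ ∀ a b, I a b → J (w a) (w b) := by
  constructor
  · intro h a b hab
    exact h (show I _ _ by simpa using hab)
  · intro h a b hab
    simpa using h _ _ hab

theorem permAct_one (I : Setoid α) : permAct 1 I = I := rfl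

theorem permAct_mul (u w : Equiv.Perm α) (I : Setoid α) :
    permAct (u * w) I = permAct u (permAct w I) := rfl

theorem permAct_bot (w : Equiv.Perm α) : permAct w (⊥ : Setoid α) = ⊥ := by
  apply le_antisymm _ bot_le
  rw [permAct_le_iff]
  intro a b h
  obtain rfl : a = b := h
  exact Setoid.refl' _ _

theorem permAct_mono (w : Equiv.Perm α) {I J : Setoid α} (h : I ≤ J) :
    permAct w I ≤ permAct w J := fun _ _ hab => h hab

theorem permAct_sup (w : Equiv.Perm α) (I J : Setoid α) :
    permAct w (I ⊔ J) = permAct w I ⊔ permAct w J := by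
  apply le_antisymm
  · have : I ⊔ J ≤ permAct w⁻¹ (permAct w I ⊔ permAct w J) := by
      apply sup_le
      · have h := permAct_mono w⁻¹ (le_sup_left : permAct w I ≤ permAct w I ⊔ permAct w J)
        rwa [← permAct_mul, inv_mul_cancel, permAct_one] at h
      · have h := permAct_mono w⁻¹ (le_sup_right : permAct w J ≤ permAct w I ⊔ permAct w J)
        rwa [← permAct_mul, inv_mul_cancel, permAct_one] at h
    have := permAct_mono w this
    rwa [← permAct_mul, mul_inv_cancel, permAct_one] at this
  · exact sup_le (permAct_mono w le_sup_left) (permAct_mono w le_sup_right)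

theorem mu_symm (a b : α) : mu a b = mu b a :=
  le_antisymm (mu_le_iff.2 (Setoid.symm' _ (mu_rel _ _)))
    (mu_le_iff.2 (Setoid.symm' _ (mu_rel _ _)))

theorem permAct_mu (w : Equiv.Perm α) (a b : α) : permAct w (mu a b) = mu (w a) (w b) := by
  apply le_antisymm
  · have : mu a b ≤ permAct w⁻¹ (mu (w a) (w b)) := mu_le_iff.2 (mu_rel (w a) (w b))
    have := permAct_mono w this
    rwa [← permAct_mul, mul_inv_cancel, permAct_one] at this
  · refine mu_le_iff.2 ?_
    show (mu a b) _ _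
    simpa using mu_rel a b

theorem mu_tri (a b c : α) : mu a b ⊔ mu b c = mu a b ⊔ mu a c := by
  apply le_antisymm
  · refine sup_le le_sup_left (mu_le_iff.2 ?_)
    have h1 : (mu a b ⊔ mu a c) a b := (le_sup_left : mu a b ≤ mu a b ⊔ mu a c) (mu_rel a b)
    have h2 : (mu a b ⊔ mu a c) a c := (le_sup_right : mu a c ≤ mu a b ⊔ mu a c) (mu_rel a c)
    exact Setoid.trans' _ (Setoid.symm' _ h1) h2
  · refine sup_le le_sup_left (mu_le_iff.2 ?_)
    have h1 : (mu a b ⊔ mu b c) a b := (le_sup_left : mu a b ≤ mu a b ⊔ mu b c) (mu_rel a b)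
    have h2 : (mu a b ⊔ mu b c) b c := (le_sup_right : mu b c ≤ mu a b ⊔ mu b c) (mu_rel b c)
    exact Setoid.trans' _ h1 h2

end PsiSec
section VBRel
variable {n : ℕ}

/-- Generator `σ i` of the virtual braid group. -/
abbrev vbS (i : Fin (n - 1)) : VirtualBraidGroup n := PresentedGroup.of (VGen.σ i)
/-- Generator `ν i` of the virtual braid group. -/
abbrev vbV (i : Fin (n - 1)) : VirtualBraidGroup n := PresentedGroup.of (VGen.ν i)

theorem vb_braidσ (i j : Fin (n - 1)) (h : adjIdx i j) :
    vbS i * vbS j * vbS i = vbS j * vbS i * vbS j :=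
  PresentedGroup.mk_eq_mk_of_mul_inv_mem (VRelator.braidσ i j h)
theorem vb_braidν (i j : Fin (n - 1)) (h : adjIdx i j) :
    vbV i * vbV j * vbV i = vbV j * vbV i * vbV j :=
  PresentedGroup.mk_eq_mk_of_mul_inv_mem (VRelator.braidν i j h)
theorem vb_commσσ (i j : Fin (n - 1)) (h : farIdx i j) : vbS i * vbS j = vbS j * vbS i :=
  PresentedGroup.mk_eq_mk_of_mul_inv_mem (VRelator.commσσ i j h)
theorem vb_commνν (i j : Fin (n - 1)) (h : farIdx i j) : vbV i * vbV j = vbV j * vbV i :=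
  PresentedGroup.mk_eq_mk_of_mul_inv_mem (VRelator.commνν i j h)
theorem vb_commσν (i j : Fin (n - 1)) (h : farIdx i j) : vbS i * vbV j = vbV j * vbS i :=
  PresentedGroup.mk_eq_mk_of_mul_inv_mem (VRelator.commσν i j h)
theorem vb_invol (i : Fin (n - 1)) : vbV i * vbV i = 1 :=
  PresentedGroup.one_of_mem (VRelator.invol i)
theorem vb_mixed (i j : Fin (n - 1)) (h : adjIdx i j) :
    vbS i * vbV j * vbV i = vbV j * vbV i * vbS j :=
  PresentedGroup.mk_eq_mk_of_mul_inv_mem (VRelator.mixed i j h)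

end VBRel

/-- The semidirect product of partitions and the virtual braid group. -/
@[ext]
structure SDP {n : ℕ} (π : VirtualBraidGroup n →* Equiv.Perm (Fin n)) where
  /-- partition part -/
  fst : Setoid (Fin n)
  /-- group part -/
  snd : VirtualBraidGroup n

section SDPsec
variable {n : ℕ} {π : VirtualBraidGroup n →* Equiv.Perm (Fin n)}

instance : Monoid (SDP π) where
  mul x y := ⟨x.fst ⊔ permAct (π x.snd) y.fst, x.snd * y.snd⟩
  one := ⟨⊥, 1⟩
  mul_assoc x y z := by
    apply SDP.ext
    · show (x.fst ⊔ permAct (π x.snd) y.fst) ⊔ permAct (π (x.snd * y.snd)) z.fst =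
        x.fst ⊔ permAct (π x.snd) (y.fst ⊔ permAct (π y.snd) z.fst)
      rw [permAct_sup, map_mul, permAct_mul, sup_assoc]
    · exact mul_assoc _ _ _
  one_mul x := by
    apply SDP.ext
    · show ⊥ ⊔ permAct (π 1) x.fst = x.fst
      rw [map_one, permAct_one, bot_sup_eq]
    · exact one_mul _
  mul_one x := by
    apply SDP.ext
    · show x.fst ⊔ permAct (π x.snd) ⊥ = x.fst
      rw [permAct_bot, sup_bot_eq]
    · exact mul_one _

theorem SDP.mul_mk (I J : Setoid (Fin n)) (g h : VirtualBraidGroup n) :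
    (⟨I, g⟩ * ⟨J, h⟩ : SDP π) = ⟨I ⊔ permAct (π g) J, g * h⟩ := rfl

theorem SDP.one_def : (1 : SDP π) = ⟨⊥, 1⟩ := rfl

/-- Images of generators. -/
def genF (π : VirtualBraidGroup n →* Equiv.Perm (Fin n)) : TVGen n → SDP π
  | .s i => ⟨⊥, vbS i⟩
  | .s' i => ⟨⊥, (vbS i)⁻¹⟩
  | .v i => ⟨⊥, vbV i⟩
  | .e i => ⟨mu (lo i) (hi i), 1⟩

/-- The action of an adjacent transposition on an adjacent generator, three points version. -/
theorem swap_facts (i j : Fin (n - 1)) (h : adjIdx i j) :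
    ∃ a b c : Fin n, a ≠ b ∧ a ≠ c ∧ b ≠ c ∧
      Equiv.swap (lo i) (hi i) = Equiv.swap a b ∧ mu (lo i) (hi i) = mu a b ∧
      Equiv.swap (lo j) (hi j) = Equiv.swap b c ∧ mu (lo j) (hi j) = mu b c := by
  rcases h with h | h
  · refine ⟨lo i, hi i, hi j, ?_, ?_, ?_, rfl, rfl, ?_⟩
    · simp [lo, hi]
    · simp [lo, hi]; omega
    · simp [hi]; omega
    · have : lo j = hi i := by ext; simp [lo, hi, h]
      rw [this]; exact ⟨rfl, rfl⟩
  · refine ⟨hi i, lo i, lo j, ?_, ?_, ?_, Equiv.swap_comm _ _, mu_symm _ _, ?_⟩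
    · simp [lo, hi]
    · simp [lo, hi]; omega
    · simp [lo]; omega
    · have : hi j = lo i := by ext; simp [lo, hi, h]
      rw [this]; exact ⟨Equiv.swap_comm _ _, mu_symm _ _⟩

theorem swap_far (i j : Fin (n - 1)) (h : ¬ adjIdx i j) :
    permAct (Equiv.swap (lo i) (hi i)) (mu (lo j) (hi j)) = mu (lo j) (hi j) := by
  rw [permAct_mu]
  by_cases hij : i = j
  · subst hij
    rw [Equiv.swap_apply_left, Equiv.swap_apply_right, mu_symm]
  · have hij' : i.1 ≠ j.1 := fun h => hij (Fin.ext h)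
    unfold adjIdx at h
    rw [Equiv.swap_apply_of_ne_of_ne, Equiv.swap_apply_of_ne_of_ne] <;>
      simp [lo, hi] <;> omega

theorem genF_rel (hπσ : ∀ i : Fin (n - 1), π (vbS i) = Equiv.swap (lo i) (hi i))
    (hπν : ∀ i : Fin (n - 1), π (vbV i) = Equiv.swap (lo i) (hi i)) :
    ∀ a b : FreeMonoid (TVGen n), TVRel n a b →
      FreeMonoid.lift (genF π) a = FreeMonoid.lift (genF π) b := by
  intro a b h
  have key1 : ∀ i j : Fin (n - 1), adjIdx i j →
      mu (lo i) (hi i) = permAct (Equiv.swap (lo j) (hi j))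
        (permAct (Equiv.swap (lo i) (hi i)) (mu (lo j) (hi j))) := by
    intro i j hij
    obtain ⟨a, b, c, hab, hac, hbc, h1, h2, h3, h4⟩ := swap_facts i j hij
    rw [h1, h2, h3, h4, permAct_mu, permAct_mu, Equiv.swap_apply_right,
      Equiv.swap_apply_of_ne_of_ne hac.symm hbc.symm, Equiv.swap_apply_right,
      Equiv.swap_apply_of_ne_of_ne hab hac]
  have key2 : ∀ i j : Fin (n - 1), adjIdx i j →
      mu (lo i) (hi i) ⊔ mu (lo j) (hi j) =
        mu (lo j) (hi j) ⊔ permAct (Equiv.swap (lo i) (hi i)) (mu (lo j) (hi j)) := by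
    intro i j hij
    obtain ⟨a, b, c, hab, hac, hbc, h1, h2, h3, h4⟩ := swap_facts i j hij
    rw [h1, h2, h4, permAct_mu, Equiv.swap_apply_right,
      Equiv.swap_apply_of_ne_of_ne hac.symm hbc.symm, sup_comm, mu_symm a b, mu_symm b c, mu_tri,
      mu_symm a c]
  have key3 : ∀ i j : Fin (n - 1), adjIdx i j →
      mu (lo j) (hi j) ⊔ permAct (Equiv.swap (lo i) (hi i)) (mu (lo j) (hi j)) =
        permAct (Equiv.swap (lo i) (hi i)) (mu (lo i) (hi i)) ⊔
          permAct (Equiv.swap (lo i) (hi i)) (mu (lo j) (hi j)) := by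
    intro i j hij
    obtain ⟨a, b, c, hab, hac, hbc, h1, h2, h3, h4⟩ := swap_facts i j hij
    rw [h1, h2, h4, permAct_mu, permAct_mu, Equiv.swap_apply_right, Equiv.swap_apply_left,
      Equiv.swap_apply_of_ne_of_ne hac.symm hbc.symm, mu_symm b c, mu_symm a c, mu_symm b a,
      sup_comm, sup_comm (mu a b), mu_tri]
  induction h with
  | B0a i => simp [genF, SDP.mul_mk, SDP.one_def, permAct_bot]
  | B0b i => simp [genF, SDP.mul_mk, SDP.one_def, permAct_bot]
  | B1 i j h => simp [genF, SDP.mul_mk, permAct_bot, vb_braidσ i j h]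
  | V2 i j h => simp [genF, SDP.mul_mk, permAct_bot, vb_braidν i j h]
  | B2 i j h => simp [genF, SDP.mul_mk, permAct_bot, vb_commσσ i j h]
  | V3 i j h => simp [genF, SDP.mul_mk, permAct_bot, vb_commνν i j h]
  | V5 i j h => simp [genF, SDP.mul_mk, permAct_bot, vb_commσν i j h]
  | V1 i => simp [genF, SDP.mul_mk, SDP.one_def, permAct_bot, vb_invol i]
  | V4 i j h => simp [genF, SDP.mul_mk, permAct_bot, vb_mixed i j h]
  | T1 i => simp [genF, SDP.mul_mk, permAct_one]
  | T2 i j => simp [genF, SDP.mul_mk, permAct_one, sup_comm]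
  | T3 i j h => simpa [genF, SDP.mul_mk, permAct_one, permAct_bot, permAct_mul, hπσ, hπν] using key1 i j h
  | T4 i j h => simp [genF, SDP.mul_mk, permAct_one, permAct_bot, hπσ, hπν, swap_far i j h]
  | T5a i j h => simpa [genF, SDP.mul_mk, permAct_one, permAct_bot, hπσ, hπν] using key2 i j h
  | T5b i j h => simpa [genF, SDP.mul_mk, permAct_one, permAct_bot, hπσ, hπν] using key3 i j h
  | TV1 i j h => simpa [genF, SDP.mul_mk, permAct_one, permAct_bot, permAct_mul, hπσ, hπν] using key1 i j h
  | TV2 i j h => simpa [genF, SDP.mul_mk, permAct_one, permAct_bot, permAct_mul, hπσ, hπν] using key1 i j h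
  | TV3 i j h => simpa [genF, SDP.mul_mk, permAct_one, permAct_bot, permAct_mul, hπσ, hπν] using key1 i j h
  | TV4 i j h => simp [genF, SDP.mul_mk, permAct_one, permAct_bot, hπσ, hπν]
  | TV5 i j h =>
    have h' : ¬ adjIdx j i := fun hh => h (by unfold adjIdx at *; omega)
    simp [genF, SDP.mul_mk, permAct_one, permAct_bot, hπσ, hπν, swap_far j i h']
  | TV6a i j h => simpa [genF, SDP.mul_mk, permAct_one, permAct_bot, hπσ, hπν] using key2 i j h
  | TV6b i j h => simpa [genF, SDP.mul_mk, permAct_one, permAct_bot, hπσ, hπν] using key3 i j h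

end SDPsec
section MSide
open PresentedMonoid
variable {n : ℕ}

/-- The tied virtual braid monoid. -/
abbrev TVB (n : ℕ) := PresentedMonoid (TVRel n)

/-- generator -/
abbrev gs (i : Fin (n - 1)) : TVB n := PresentedMonoid.of (TVRel n) (.s i)
/-- generator -/
abbrev gs' (i : Fin (n - 1)) : TVB n := PresentedMonoid.of (TVRel n) (.s' i)
/-- generator -/
abbrev gv (i : Fin (n - 1)) : TVB n := PresentedMonoid.of (TVRel n) (.v i)
/-- generator -/
abbrev ge (i : Fin (n - 1)) : TVB n := PresentedMonoid.of (TVRel n) (.e i)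

/-- `s i` as a unit. -/
def us (i : Fin (n - 1)) : (TVB n)ˣ :=
  ⟨gs i, gs' i, mk_eq_mk_of_rel (TVRel.B0a i), mk_eq_mk_of_rel (TVRel.B0b i)⟩

/-- `v i` as a unit. -/
def uv (i : Fin (n - 1)) : (TVB n)ˣ :=
  ⟨gv i, gv i, mk_eq_mk_of_rel (TVRel.V1 i), mk_eq_mk_of_rel (TVRel.V1 i)⟩

/-- unit images of the generators -/
def ugen : VGen n → (TVB n)ˣ
  | .σ i => us i
  | .ν i => uv i

theorem u_B1 (i j : Fin (n - 1)) (h : adjIdx i j) : us i * us j * us i = us j * us i * us j :=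
  Units.ext (mk_eq_mk_of_rel (TVRel.B1 i j h))
theorem u_V2 (i j : Fin (n - 1)) (h : adjIdx i j) : uv i * uv j * uv i = uv j * uv i * uv j :=
  Units.ext (mk_eq_mk_of_rel (TVRel.V2 i j h))
theorem u_B2 (i j : Fin (n - 1)) (h : farIdx i j) : us i * us j = us j * us i :=
  Units.ext (mk_eq_mk_of_rel (TVRel.B2 i j h))
theorem u_V3 (i j : Fin (n - 1)) (h : farIdx i j) : uv i * uv j = uv j * uv i :=
  Units.ext (mk_eq_mk_of_rel (TVRel.V3 i j h))
theorem u_V5 (i j : Fin (n - 1)) (h : farIdx i j) : us i * uv j = uv j * us i :=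
  Units.ext (mk_eq_mk_of_rel (TVRel.V5 i j h))
theorem u_V1 (i : Fin (n - 1)) : uv i * uv i = 1 :=
  Units.ext (mk_eq_mk_of_rel (TVRel.V1 i))
theorem u_V4 (i j : Fin (n - 1)) (h : adjIdx i j) : us i * uv j * uv i = uv j * uv i * us j :=
  Units.ext (mk_eq_mk_of_rel (TVRel.V4 i j h))

theorem ugen_rel : ∀ r ∈ {x | VRelator n x}, FreeGroup.lift ugen r = 1 := by
  intro r hr
  induction hr with
  | braidσ i j h => simp only [map_mul, map_inv, FreeGroup.lift_apply_of, ugen]; exact mul_inv_eq_one.2 (u_B1 i j h)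
  | braidν i j h => simp only [map_mul, map_inv, FreeGroup.lift_apply_of, ugen]; exact mul_inv_eq_one.2 (u_V2 i j h)
  | commσσ i j h => simp only [map_mul, map_inv, FreeGroup.lift_apply_of, ugen]; exact mul_inv_eq_one.2 (u_B2 i j h)
  | commνν i j h => simp only [map_mul, map_inv, FreeGroup.lift_apply_of, ugen]; exact mul_inv_eq_one.2 (u_V3 i j h)
  | commσν i j h => simp only [map_mul, map_inv, FreeGroup.lift_apply_of, ugen]; exact mul_inv_eq_one.2 (u_V5 i j h)
  | invol i => simp only [map_mul, FreeGroup.lift_apply_of, ugen]; exact u_V1 i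
  | mixed i j h => simp only [map_mul, map_inv, FreeGroup.lift_apply_of, ugen]; exact mul_inv_eq_one.2 (u_V4 i j h)

/-- The homomorphism from the virtual braid group to units. -/
def phi (n : ℕ) : VirtualBraidGroup n →* (TVB n)ˣ := PresentedGroup.toGroup ugen_rel

theorem phi_S (i : Fin (n - 1)) : phi n (vbS i) = us i := PresentedGroup.toGroup.of ugen_rel
theorem phi_V (i : Fin (n - 1)) : phi n (vbV i) = uv i := PresentedGroup.toGroup.of ugen_rel

/-- conjugation elements -/
abbrev cj (u : (TVB n)ˣ) : ConjAct (TVB n)ˣ := ConjAct.toConjAct u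

theorem cj_mul (u w : (TVB n)ˣ) : cj (u * w) = cj u * cj w := rfl

theorem cj_inv (u : (TVB n)ˣ) : cj u⁻¹ = (cj u)⁻¹ := rfl

theorem cj_smul (u : (TVB n)ˣ) (x : TVB n) : cj u • x = u * x * (u⁻¹ : (TVB n)ˣ) := by
  rw [ConjAct.units_smul_def]; rfl

theorem cj_smul_eq_iff (u : (TVB n)ˣ) (x y : TVB n) : cj u • x = y ↔ u * x = y * u := by
  rw [cj_smul, Units.mul_inv_eq_iff_eq_mul]

theorem cj_uv_smul_smul (i : Fin (n - 1)) (x : TVB n) : cj (uv i) • cj (uv i) • x = x := by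
  rw [smul_smul, ← cj_mul, u_V1]; exact one_smul _ _

theorem cj_fix_s (i j : Fin (n - 1)) (h : ¬ adjIdx i j) : cj (us i) • ge j = ge j :=
  (cj_smul_eq_iff _ _ _).2 (mk_eq_mk_of_rel (TVRel.T4 i j h))

theorem adjIdx_symm {m : ℕ} {i j : Fin m} (h : adjIdx i j) : adjIdx j i := Or.symm h

theorem cj_fix_v (i j : Fin (n - 1)) (h : ¬ adjIdx i j) : cj (uv i) • ge j = ge j :=
  (cj_smul_eq_iff _ _ _).2 (mk_eq_mk_of_rel (TVRel.TV5 j i fun hh => h (adjIdx_symm hh))).symm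

theorem cj_flip (i j : Fin (n - 1)) (h : adjIdx i j) : cj (uv j) • ge i = cj (uv i) • ge j := by
  have hr : ge i * gv j * gv i = gv j * gv i * ge j := mk_eq_mk_of_rel (TVRel.TV1 i j h)
  have h1 : cj (uv j * uv i) • ge j = ge i :=
    (cj_smul_eq_iff _ _ _).2 (hr.symm.trans (mul_assoc _ _ _))
  rw [← h1, cj_mul, mul_smul, cj_uv_smul_smul]

theorem cj_adj (i j : Fin (n - 1)) (h : adjIdx i j) : cj (us i) • ge j = cj (uv i) • ge j := by
  symm
  rw [cj_smul_eq_iff, cj_smul]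
  exact mk_eq_mk_of_rel (TVRel.TV4 i j h)

theorem cj_adjinv (i j : Fin (n - 1)) (h : adjIdx i j) :
    cj (us i) • cj (uv i) • ge j = ge j := by
  have h' := adjIdx_symm h
  have hr : ge j * gs i * gs j = gs i * gs j * ge i := mk_eq_mk_of_rel (TVRel.T3 j i h')
  have h1 : cj (us i * us j) • ge i = ge j :=
    (cj_smul_eq_iff _ _ _).2 (hr.symm.trans (mul_assoc _ _ _))
  rw [← cj_flip i j h, ← cj_adj j i h', smul_smul, ← cj_mul, h1]

/-- extension to natural indices -/
def extN {Y : Type*} (y : Y) (f : Fin (n - 1) → Y) (k : ℕ) : Y :=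
  if h : k < n - 1 then f ⟨k, h⟩ else y

theorem extN_eq {Y : Type*} (y : Y) (f : Fin (n - 1) → Y) (k : ℕ) (h : k < n - 1) :
    extN y f k = f ⟨k, h⟩ := dif_pos h

/-- natural-indexed conjugators -/
abbrev nv (n : ℕ) : ℕ → ConjAct (TVB n)ˣ := extN 1 fun i : Fin (n - 1) => cj (uv i)
/-- natural-indexed conjugators -/
abbrev ns (n : ℕ) : ℕ → ConjAct (TVB n)ˣ := extN 1 fun i : Fin (n - 1) => cj (us i)
/-- natural-indexed ties -/
abbrev ne (n : ℕ) : ℕ → TVB n := extN 1 fun i : Fin (n - 1) => ge i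

theorem good_v (n : ℕ) : GoodT (n - 1) (nv n) (nv n) (ne n) where
  far i j hi hj h := by
    simp only [extN_eq _ _ _ hi, extN_eq _ _ _ hj, ← map_mul]
    rw [u_V3 ⟨i, hi⟩ ⟨j, hj⟩ h]
  mix i j hi hj h := by
    simp only [extN_eq _ _ _ hi, extN_eq _ _ _ hj, ← map_mul]
    rw [u_V2 ⟨i, hi⟩ ⟨j, hj⟩ h]
  fix i j hi hj h := by
    simp only [extN_eq _ _ _ hi, extN_eq _ _ _ hj]
    exact cj_fix_v _ _ h
  adj i j hi hj h := rfl
  adjinv i j hi hj h := by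
    simp only [extN_eq _ _ _ hi, extN_eq _ _ _ hj]
    exact cj_uv_smul_smul _ _
  flip i j hi hj h := by
    simp only [extN_eq _ _ _ hi, extN_eq _ _ _ hj]
    exact cj_flip _ _ h

theorem good_s (n : ℕ) : GoodT (n - 1) (nv n) (ns n) (ne n) where
  far i j hi hj h := by
    simp only [extN_eq _ _ _ hi, extN_eq _ _ _ hj, ← map_mul]
    rw [u_V5 ⟨i, hi⟩ ⟨j, hj⟩ h]
  mix i j hi hj h := by
    simp only [extN_eq _ _ _ hi, extN_eq _ _ _ hj, ← map_mul]
    rw [u_V4 ⟨i, hi⟩ ⟨j, hj⟩ h]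
  fix i j hi hj h := by
    simp only [extN_eq _ _ _ hi, extN_eq _ _ _ hj]
    exact cj_fix_s _ _ h
  adj i j hi hj h := by
    simp only [extN_eq _ _ _ hi, extN_eq _ _ _ hj]
    exact cj_adj _ _ h
  adjinv i j hi hj h := by
    simp only [extN_eq _ _ _ hi, extN_eq _ _ _ hj]
    exact cj_adjinv _ _ h
  flip := (good_v n).flip

/-- The tie between strands `a` and `b`. -/
def tie (a b : Fin n) : TVB n := ep 1 (nv n) (ne n) a.1 b.1

theorem tie_self (a : Fin n) : tie a a = 1 := ep_self _ _ _ _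
theorem tie_symm (a b : Fin n) : tie a b = tie b a := ep_symm _ _ _ _ _
theorem tie_lo_hi (i : Fin (n - 1)) : tie (lo i) (hi i) = ge i :=
  (ep_lt 1 (nv n) (ne n) i.1 0).trans (extN_eq _ _ _ i.2)

theorem swap_val (i : Fin (n - 1)) (a : Fin n) :
    (Equiv.swap (lo i) (hi i) a).1 = Equiv.swap i.1 (i.1 + 1) a.1 := by
  simp only [Equiv.swap_apply_def, lo, hi, Fin.ext_iff]
  split_ifs <;> rfl

theorem tie_uv (i : Fin (n - 1)) (a b : Fin n) : cj (uv i) • tie a b =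
    tie (Equiv.swap (lo i) (hi i) a) (Equiv.swap (lo i) (hi i) b) := by
  have := ep_swap (good_v n) (good_v n) (1 : TVB n) (fun g => smul_one g) i.1 a.1 b.1 i.2
    (by omega) (by omega)
  rw [show nv n i.1 = _ from extN_eq _ _ _ i.2, ← swap_val, ← swap_val] at this
  exact this

theorem tie_us (i : Fin (n - 1)) (a b : Fin n) : cj (us i) • tie a b =
    tie (Equiv.swap (lo i) (hi i) a) (Equiv.swap (lo i) (hi i) b) := by
  have := ep_swap (good_s n) (good_v n) (1 : TVB n) (fun g => smul_one g) i.1 a.1 b.1 i.2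
    (by omega) (by omega)
  rw [show ns n i.1 = _ from extN_eq _ _ _ i.2, ← swap_val, ← swap_val] at this
  exact this

variable {π : VirtualBraidGroup n →* Equiv.Perm (Fin n)}

theorem tie_act (hπσ : ∀ i : Fin (n - 1), π (vbS i) = Equiv.swap (lo i) (hi i))
    (hπν : ∀ i : Fin (n - 1), π (vbV i) = Equiv.swap (lo i) (hi i))
    (g : VirtualBraidGroup n) : ∀ a b : Fin n,
    cj (phi n g) • tie a b = tie (π g a) (π g b) := by
  have hg : g ∈ Subgroup.closure (Set.range (PresentedGroup.of (rels := {x | VRelator n x}))) := by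
    rw [PresentedGroup.closure_range_of]; trivial
  induction hg using Subgroup.closure_induction with
  | mem x hx =>
    intro a b
    obtain ⟨i | i, rfl⟩ := hx
    · rw [phi_S, hπσ, tie_us]
    · rw [phi_V, hπν, tie_uv]
  | one => intro a b; simp
  | mul x y _ _ hx hy =>
    intro a b
    rw [map_mul, cj_mul, mul_smul, hy, hx, map_mul]; rfl
  | inv x _ hx =>
    intro a b
    rw [map_inv, cj_inv, inv_smul_eq_iff, hx, map_inv]; simp

theorem pi_surj (hπν : ∀ i : Fin (n - 1), π (vbV i) = Equiv.swap (lo i) (hi i)) :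
    Function.Surjective π := by
  rw [← MonoidHom.mrange_eq_top, eq_top_iff]
  rcases n with _ | n
  · intro x _
    exact ⟨1, Subsingleton.elim _ _⟩
  · rw [← Equiv.Perm.mclosure_swap_castSucc_succ, Submonoid.closure_le]
    rintro _ ⟨i, rfl⟩
    exact ⟨vbV (n := n + 1) i, hπν i⟩

theorem tie_perm (hπσ : ∀ i : Fin (n - 1), π (vbS i) = Equiv.swap (lo i) (hi i))
    (hπν : ∀ i : Fin (n - 1), π (vbV i) = Equiv.swap (lo i) (hi i)) (w : Equiv.Perm (Fin n)) :
    ∃ c : TVB n ≃* TVB n, ∀ a b, c (tie a b) = tie (w a) (w b) := by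
  obtain ⟨g, rfl⟩ := pi_surj hπν w
  exact ⟨MulDistribMulAction.toMulEquiv (TVB n) (cj (phi n g)), tie_act hπσ hπν g⟩

end MSide
section Final
open PresentedMonoid
variable {n : ℕ} {π : VirtualBraidGroup n →* Equiv.Perm (Fin n)}

theorem extend_perm {k : ℕ} (y : Fin k → Fin n) (hy : Function.Injective y) :
    ∃ (h : k ≤ n) (w : Equiv.Perm (Fin n)), ∀ i : Fin k, w (Fin.castLE h i) = y i := by
  have h : k ≤ n := by simpa using Fintype.card_le_of_injective y hy
  obtain ⟨w, hw⟩ := Equiv.Perm.exists_extending_pair (Fin.castLE h) y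
    (Fin.castLE_injective h) hy
  exact ⟨h, w, fun i => by simpa using hw i⟩

theorem inj2 {a b : Fin n} (h : a ≠ b) : Function.Injective ![a, b] := by
  intro i j hij
  fin_cases i <;> fin_cases j <;> simp_all

theorem inj3 {a b c : Fin n} (h : a ≠ b) (h1 : a ≠ c) (h2 : b ≠ c) :
    Function.Injective ![a, b, c] := by
  intro i j hij
  fin_cases i <;> fin_cases j <;> simp_all

theorem inj4 {a b c d : Fin n} (h : a ≠ b) (h1 : a ≠ c) (h2 : b ≠ c) (h3 : a ≠ d) (h4 : b ≠ d)
    (h5 : c ≠ d) : Function.Injective ![a, b, c, d] := by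
  intro i j hij
  fin_cases i <;> fin_cases j <;> simp_all

section
theorem ge_idem (i : Fin (n - 1)) : ge i * ge i = ge i := mk_eq_mk_of_rel (TVRel.T1 i)
theorem ge_comm (i j : Fin (n - 1)) : ge i * ge j = ge j * ge i := mk_eq_mk_of_rel (TVRel.T2 i j)

theorem tie_pair {a b : Fin n} (h : a ≠ b) :
    ∃ (i : Fin (n - 1)) (w : Equiv.Perm (Fin n)), w (lo i) = a ∧ w (hi i) = b := by
  obtain ⟨h, w, hw⟩ := extend_perm _ (inj2 h)
  exact ⟨⟨0, by omega⟩, w, hw 0, hw 1⟩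

theorem tie_idem
    (hπσ : ∀ i : Fin (n - 1), π (vbS i) = Equiv.swap (lo i) (hi i))
    (hπν : ∀ i : Fin (n - 1), π (vbV i) = Equiv.swap (lo i) (hi i))
    (a b : Fin n) : tie a b * tie a b = tie a b := by
  by_cases h : a = b
  · subst h; rw [tie_self, mul_one]
  obtain ⟨i, w, h1, h2⟩ := tie_pair h
  obtain ⟨c, hc⟩ := tie_perm hπσ hπν w
  rw [← h1, ← h2, ← hc, tie_lo_hi, ← map_mul, ge_idem]

theorem tie_trans
    (hπσ : ∀ i : Fin (n - 1), π (vbS i) = Equiv.swap (lo i) (hi i))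
    (hπν : ∀ i : Fin (n - 1), π (vbV i) = Equiv.swap (lo i) (hi i))
    (a b c : Fin n) : tie a b * tie b c * tie a c = tie a b * tie b c := by
  by_cases hab : a = b
  · subst hab; rw [tie_self, one_mul, tie_idem hπσ hπν]
  by_cases hbc : b = c
  · subst hbc; rw [tie_self, mul_one, tie_idem hπσ hπν]
  by_cases hac : a = c
  · subst hac; rw [tie_self, mul_one]
  obtain ⟨h, w, hw⟩ := extend_perm _ (inj3 hab hac hbc)
  obtain ⟨f, hf⟩ := tie_perm hπσ hπν w
  let i : Fin (n - 1) := ⟨0, by omega⟩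
  let j : Fin (n - 1) := ⟨1, by omega⟩
  have hadj : adjIdx j i := Or.inr rfl
  have h1 : w (lo i) = a := hw 0
  have h2 : w (hi i) = b := hw 1
  have h2' : w (lo j) = b := hw 1
  have h3 : w (hi j) = c := hw 2
  have e1 : tie a b = f (ge i) := by rw [← tie_lo_hi, hf, h1, h2]
  have e2 : tie b c = f (ge j) := by rw [← tie_lo_hi, hf, h2', h3]
  have e3 : tie a c = f (cj (uv j) • ge i) := by
    rw [← tie_lo_hi, tie_uv, hf]
    rw [Equiv.swap_apply_of_ne_of_ne (by simp [lo, i, j]) (by simp [lo, hi, i, j]),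
      show hi i = lo j from rfl, Equiv.swap_apply_left, h1, h3]
  have r1 : ge j * ge i * gv j = ge i * gv j * ge i := mk_eq_mk_of_rel (TVRel.TV6a j i hadj)
  have r2 : gv j * gv j = (1 : TVB n) := mk_eq_mk_of_rel (TVRel.V1 j)
  have r3 : ge j * ge i = ge i * (cj (uv j) • ge i) := by
    rw [cj_smul]
    show _ = ge i * (gv j * ge i * gv j)
    rw [← mul_assoc, ← mul_assoc, ← r1, mul_assoc _ (gv j), r2, mul_one]
  have r4 : (cj (uv j) • ge i) * (cj (uv j) • ge i) = cj (uv j) • ge i := by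
    rw [← smul_mul', ge_idem]
  rw [e1, e2, e3, ← map_mul, ← map_mul, ge_comm, r3, mul_assoc, r4]

theorem tie_comm_adj
    (hπσ : ∀ i : Fin (n - 1), π (vbS i) = Equiv.swap (lo i) (hi i))
    (hπν : ∀ i : Fin (n - 1), π (vbV i) = Equiv.swap (lo i) (hi i))
    {a b c : Fin n} (hab : a ≠ b) (hbc : b ≠ c) :
    tie a b * tie b c = tie b c * tie a b := by
  by_cases hac : a = c
  · subst hac; rw [tie_symm a b]
  obtain ⟨h, w, hw⟩ := extend_perm _ (inj3 hab hac hbc)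
  obtain ⟨f, hf⟩ := tie_perm hπσ hπν w
  let i : Fin (n - 1) := ⟨0, by omega⟩
  let j : Fin (n - 1) := ⟨1, by omega⟩
  have h1 : w (lo i) = a := hw 0
  have h2 : w (hi i) = b := hw 1
  have h2' : w (lo j) = b := hw 1
  have h3 : w (hi j) = c := hw 2
  have e1 : tie a b = f (ge i) := by rw [← tie_lo_hi, hf, h1, h2]
  have e2 : tie b c = f (ge j) := by rw [← tie_lo_hi, hf, h2', h3]
  rw [e1, e2, ← map_mul, ge_comm, map_mul]

theorem tie_comm
    (hπσ : ∀ i : Fin (n - 1), π (vbS i) = Equiv.swap (lo i) (hi i))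
    (hπν : ∀ i : Fin (n - 1), π (vbV i) = Equiv.swap (lo i) (hi i))
    (a b c d : Fin n) : tie a b * tie c d = tie c d * tie a b := by
  by_cases hab : a = b
  · subst hab; rw [tie_self, mul_one, one_mul]
  by_cases hcd : c = d
  · subst hcd; rw [tie_self, mul_one, one_mul]
  by_cases hac : a = c
  · subst hac
    rw [tie_symm a b, tie_comm_adj hπσ hπν (Ne.symm hab) hcd]
  by_cases had : a = d
  · subst had
    rw [tie_symm a b, tie_symm c a, tie_comm_adj hπσ hπν (Ne.symm hab) (Ne.symm hcd)]
  by_cases hbc : b = c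
  · subst hbc
    rw [tie_comm_adj hπσ hπν hab hcd]
  by_cases hbd : b = d
  · subst hbd
    rw [tie_symm c b, tie_comm_adj hπσ hπν hab (Ne.symm hcd)]
  obtain ⟨h, w, hw⟩ := extend_perm _ (inj4 hab hac hbc had hbd hcd)
  obtain ⟨f, hf⟩ := tie_perm hπσ hπν w
  let i : Fin (n - 1) := ⟨0, by omega⟩
  let j : Fin (n - 1) := ⟨2, by omega⟩
  have h1 : w (lo i) = a := hw 0
  have h2 : w (hi i) = b := hw 1
  have h2' : w (lo j) = c := hw 2
  have h3 : w (hi j) = d := hw 3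
  have e1 : tie a b = f (ge i) := by rw [← tie_lo_hi, hf, h1, h2]
  have e2 : tie c d = f (ge j) := by rw [← tie_lo_hi, hf, h2', h3]
  rw [e1, e2, ← map_mul, ge_comm, map_mul]

theorem exists_inverse
    (hπσ : ∀ i : Fin (n - 1), π (vbS i) = Equiv.swap (lo i) (hi i))
    (hπν : ∀ i : Fin (n - 1), π (vbV i) = Equiv.swap (lo i) (hi i))
    : ∃ K : SDP π →* TVB n, ∀ x : TVGen n,
    K (genF π x) = PresentedMonoid.of (TVRel n) x := by
  have hc := tie_comm hπσ hπν
  have hs : ∀ a b : Fin n, tie a b = tie b a := tie_symm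
  have h1 : ∀ a : Fin n, tie a a = 1 := tie_self
  have ht := tie_trans hπσ hπν
  have hi' := tie_idem hπσ hπν
  choose psi hpsi using IsPsi.exists (f := fun a b : Fin n => tie a b) hc hi'
  have psi_bot : psi ⊥ = 1 := (hpsi ⊥).unique hc (IsPsi.bot h1)
  have psi_sup : ∀ I J, psi (I ⊔ J) = psi I * psi J := fun I J =>
    (hpsi _).unique hc ((hpsi I).sup h1 hs ht hc (hpsi J))
  have psi_mu : ∀ a b, psi (mu a b) = tie a b := fun a b =>
    (hpsi _).unique hc (IsPsi.mu h1 hs ht hi' a b)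
  have psi_act : ∀ g I, psi (permAct (π g) I) * phi n g = phi n g * psi I := by
    intro g I
    have := (hpsi I).act (MulDistribMulAction.toMulEquiv (TVB n) (cj (phi n g))) (π g)
      (tie_act hπσ hπν g)
    rw [(hpsi _).unique hc this]
    symm
    rw [← cj_smul_eq_iff]
    rfl
  refine ⟨⟨⟨fun x => psi x.fst * phi n x.snd, ?_⟩, ?_⟩, ?_⟩
  · show psi ⊥ * phi n 1 = 1
    rw [psi_bot, map_one, Units.val_one, one_mul]
  · intro x y
    show psi (x.fst ⊔ permAct (π x.snd) y.fst) * phi n (x.snd * y.snd) =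
      psi x.fst * phi n x.snd * (psi y.fst * phi n y.snd)
    rw [psi_sup, map_mul, Units.val_mul, mul_assoc, ← mul_assoc (psi (permAct _ _)), psi_act]
    simp only [mul_assoc]
  · rintro (i | i | i | i)
    · show psi ⊥ * phi n (vbS i) = _
      rw [psi_bot, one_mul, phi_S]; rfl
    · show psi ⊥ * phi n (vbS i)⁻¹ = _
      rw [psi_bot, one_mul, map_inv, phi_S]; rfl
    · show psi ⊥ * phi n (vbV i) = _
      rw [psi_bot, one_mul, phi_V]; rfl
    · show psi (mu (lo i) (hi i)) * phi n 1 = _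
      rw [psi_mu, map_one, Units.val_one, mul_one, tie_lo_hi]

/-- every submonoid containing the images of the generators is everything -/
theorem genF_generate
    (hπσ : ∀ i : Fin (n - 1), π (vbS i) = Equiv.swap (lo i) (hi i))
    (hπν : ∀ i : Fin (n - 1), π (vbV i) = Equiv.swap (lo i) (hi i))
    (H : Submonoid (SDP π)) (hH : ∀ x, genF π x ∈ H) : ∀ x, x ∈ H := by
  have hg : ∀ g : VirtualBraidGroup n, (⟨⊥, g⟩ : SDP π) ∈ H ∧ (⟨⊥, g⁻¹⟩ : SDP π) ∈ H := by
    intro g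
    have hg : g ∈ Subgroup.closure
        (Set.range (PresentedGroup.of (rels := {x | VRelator n x}))) := by
      rw [PresentedGroup.closure_range_of]; trivial
    have hm : ∀ a b : VirtualBraidGroup n, (⟨⊥, a * b⟩ : SDP π) = ⟨⊥, a⟩ * ⟨⊥, b⟩ := by
      intro a b
      rw [SDP.mul_mk, permAct_bot, sup_bot_eq]
    induction hg using Subgroup.closure_induction with
    | mem x hx =>
      obtain ⟨i | i, rfl⟩ := hx
      · exact ⟨hH (.s i), hH (.s' i)⟩
      · refine ⟨hH (.v i), ?_⟩
        rw [show (vbV i)⁻¹ = vbV i from inv_eq_of_mul_eq_one_left (vb_invol i)]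
        exact hH (.v i)
    | one => rw [inv_one]; exact ⟨H.one_mem, H.one_mem⟩
    | mul x y _ _ hx hy =>
      rw [mul_inv_rev, hm, hm]
      exact ⟨H.mul_mem hx.1 hy.1, H.mul_mem hy.2 hx.2⟩
    | inv x _ hx => rw [inv_inv]; exact hx.symm
  have hmu : ∀ a b : Fin n, (⟨mu a b, 1⟩ : SDP π) ∈ H := by
    intro a b
    by_cases hab : a = b
    · subst hab
      have : mu a a = ⊥ := le_antisymm (mu_le_iff.2 (Setoid.refl' _ _)) bot_le
      rw [this]; exact H.one_mem
    obtain ⟨i, w, h1, h2⟩ := tie_pair hab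
    obtain ⟨g, rfl⟩ := pi_surj hπν w
    have := H.mul_mem (H.mul_mem (hg g).1 (hH (.e i))) (hg g).2
    rw [genF, SDP.mul_mk, SDP.mul_mk, permAct_bot, sup_bot_eq, bot_sup_eq, permAct_mu, h1, h2,
      mul_one, mul_inv_cancel] at this
    exact this
  have hI : ∀ I : Setoid (Fin n), (⟨I, 1⟩ : SDP π) ∈ H := by
    classical
    intro I
    have key : ∀ T : Finset (Fin n × Fin n), (⟨T.sup fun x => mu x.1 x.2, 1⟩ : SDP π) ∈ H := by
      intro T
      induction T using Finset.induction_on with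
      | empty => exact H.one_mem
      | insert x T hx ih =>
        have := H.mul_mem (hmu x.1 x.2) ih
        rw [SDP.mul_mk, map_one, permAct_one, mul_one] at this
        rwa [Finset.sup_insert]
    have : I = (Finset.univ.filter fun x : Fin n × Fin n => I x.1 x.2).sup
        fun x => mu x.1 x.2 := by
      apply le_antisymm
      · intro a b hab
        have := Finset.le_sup (f := fun x : Fin n × Fin n => mu x.1 x.2)
          (s := Finset.univ.filter fun x : Fin n × Fin n => I x.1 x.2) (b := (a, b))
          (by simpa using hab)
        exact mu_le_iff.1 this
      · refine Finset.sup_le ?_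
        intro x hx
        exact mu_le_iff.2 (by simpa using hx)
    rw [this]; exact key _
  rintro ⟨I, g⟩
  have := H.mul_mem (hI I) (hg g).1
  rwa [SDP.mul_mk, permAct_bot, sup_bot_eq, one_mul] at this

end
end Final

/-- The tied virtual braid monoid `TVBₙ` is the semidirect product
`Pₙ ⋊ VBₙ`: for the homomorphism `π : VBₙ → Perm (Fin n)` with `π(σᵢ) = π(νᵢ)` the
transposition `(i, i+1)`, there is a bijection `F : TVBₙ → Setoid (Fin n) × VBₙ` with
`F(1) = (⊥, 1)`, `F(sᵢ) = (⊥, σᵢ)`, `F(sᵢ') = (⊥, σᵢ⁻¹)`, `F(vᵢ) = (⊥, νᵢ)`,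
`F(eᵢ) = (μ_{i,i+1}, 1)` and `F(x·y) = (F(x)₁ ⊔ π(F(x)₂) • F(y)₁, F(x)₂ · F(y)₂)`. -/
theorem tiedVirtualBraidMonoid_semidirect (n : ℕ) (hn : 2 ≤ n)
    (π : VirtualBraidGroup n →* Equiv.Perm (Fin n))
    (hπσ : ∀ i : Fin (n - 1),
      π (PresentedGroup.of (VGen.σ i)) = Equiv.swap (lo i) (hi i))
    (hπν : ∀ i : Fin (n - 1),
      π (PresentedGroup.of (VGen.ν i)) = Equiv.swap (lo i) (hi i)) :
    ∃ F : PresentedMonoid (TVRel n) → Setoid (Fin n) × VirtualBraidGroup n,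
      Function.Bijective F ∧
      F 1 = (⊥, 1) ∧
      (∀ i : Fin (n - 1),
        F (PresentedMonoid.of (TVRel n) (TVGen.s i)) = (⊥, PresentedGroup.of (VGen.σ i))) ∧
      (∀ i : Fin (n - 1),
        F (PresentedMonoid.of (TVRel n) (TVGen.s' i)) =
          (⊥, (PresentedGroup.of (VGen.σ i))⁻¹)) ∧
      (∀ i : Fin (n - 1),
        F (PresentedMonoid.of (TVRel n) (TVGen.v i)) = (⊥, PresentedGroup.of (VGen.ν i))) ∧
      (∀ i : Fin (n - 1),
        F (PresentedMonoid.of (TVRel n) (TVGen.e i)) = (mu (lo i) (hi i), 1)) ∧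
      ∀ x y : PresentedMonoid (TVRel n),
        F (x * y) = ((F x).1 ⊔ permAct (π (F x).2) ((F y).1), (F x).2 * (F y).2) := by
  obtain ⟨K, hK⟩ := exists_inverse hπσ hπν
  let F := PresentedMonoid.lift (genF π) (genF_rel hπσ hπν)
  have hF : ∀ x, F (PresentedMonoid.of (TVRel n) x) = genF π x := fun x => rfl
  have hKF : K.comp F = MonoidHom.id _ := by
    apply PresentedMonoid.ext
    intro x
    rw [MonoidHom.comp_apply, hF, hK]; rfl
  refine ⟨fun x => ((F x).fst, (F x).snd), ⟨?_, ?_⟩, ?_, ?_, ?_, ?_, ?_, ?_⟩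
  · intro x y h
    have h1 : F x = F y := SDP.ext (congrArg Prod.fst h) (congrArg Prod.snd h)
    have h2 := congrArg K h1
    rwa [← MonoidHom.comp_apply, ← MonoidHom.comp_apply, hKF] at h2
  · rintro ⟨I, g⟩
    obtain ⟨x, hx⟩ := genF_generate hπσ hπν (MonoidHom.mrange F)
      (fun x => ⟨PresentedMonoid.of (TVRel n) x, hF x⟩) ⟨I, g⟩
    exact ⟨x, by show ((F x).fst, (F x).snd) = (I, g); rw [hx]⟩
  · simp only [map_one]; rfl
  · intro i; rfl
  · intro i; rfl
  · intro i; rfl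
  · intro i; rfl
  · intro x y
    simp only [map_mul]; rfl
end
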